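/- arXiv:2312.02794 — 2 statements merged into one kernel-verified Lean document; each statement's English description precedes it below -/
import Mathlib

section
/- The Riemannian metric ds²_{n,m;A,B} = A·Tr(Y⁻¹dY Y⁻¹dY) + B·Tr(Y⁻¹ ᵗ(dV) dV) on 𝒫_{n,m} is invariant under the GL_{n,m}(ℝ)-action: for every g ∈ GL(n,ℝ), Y ∈ 𝒫_n, every symmetric real n×n matrix H, and every K ∈ ℝ^{m×n}, one has A·Tr((gYᵗg)⁻¹ (gHᵗg) (gYᵗg)⁻¹ (gHᵗg)) + B·Tr((gYᵗg)⁻¹ ᵗ(Kᵗg) (Kᵗg)) = A·Tr(Y⁻¹ H Y⁻¹ H) + B·Tr(Y⁻¹ ᵗK K), where A, B are arbitrary positive real constants. -/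
open Matrix

/-- Invariance of the Riemannian metric
`ds²_{n,m;A,B} = A·Tr(Y⁻¹dY Y⁻¹dY) + B·Tr(Y⁻¹ ᵗ(dV) dV)` on `𝒫_{n,m}` under the
`GL_{n,m}(ℝ)`-action: a tangent vector `(H,K)` at `(Y,V)` is moved to `(gHᵗg, Kᵗg)` at
`(gYᵗg, (V+λ)ᵗg)`, and the metric takes the same value. -/
theorem metric_invariance (n m : ℕ) (A B : ℝ) (hA : 0 < A) (hB : 0 < B)
    (g : GL (Fin n) ℝ) (Y : Matrix (Fin n) (Fin n) ℝ) (hY : Y.PosDef)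
    (H : Matrix (Fin n) (Fin n) ℝ) (hH : Hᵀ = H) (K : Matrix (Fin m) (Fin n) ℝ) :
    A * (((↑g : Matrix (Fin n) (Fin n) ℝ) * Y * (↑g : Matrix (Fin n) (Fin n) ℝ)ᵀ)⁻¹ *
          ((↑g : Matrix (Fin n) (Fin n) ℝ) * H * (↑g : Matrix (Fin n) (Fin n) ℝ)ᵀ) *
          ((↑g : Matrix (Fin n) (Fin n) ℝ) * Y * (↑g : Matrix (Fin n) (Fin n) ℝ)ᵀ)⁻¹ *
          ((↑g : Matrix (Fin n) (Fin n) ℝ) * H * (↑g : Matrix (Fin n) (Fin n) ℝ)ᵀ)).trace +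
      B * (((↑g : Matrix (Fin n) (Fin n) ℝ) * Y * (↑g : Matrix (Fin n) (Fin n) ℝ)ᵀ)⁻¹ *
          (K * (↑g : Matrix (Fin n) (Fin n) ℝ)ᵀ)ᵀ *
          (K * (↑g : Matrix (Fin n) (Fin n) ℝ)ᵀ)).trace =
    A * (Y⁻¹ * H * Y⁻¹ * H).trace + B * (Y⁻¹ * Kᵀ * K).trace := by
  have hg : IsUnit (↑g : Matrix (Fin n) (Fin n) ℝ).det :=
    (Matrix.isUnit_iff_isUnit_det _).mp g.isUnit
  generalize (↑g : Matrix (Fin n) (Fin n) ℝ) = G at hg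
  have hgt : IsUnit (Gᵀ).det := by rwa [Matrix.det_transpose]
  have key : ∀ X : Matrix (Fin n) (Fin n) ℝ, ((Gᵀ)⁻¹ * (X * Gᵀ)).trace = X.trace := by
    intro X
    rw [Matrix.trace_mul_comm, Matrix.mul_assoc, Matrix.mul_nonsing_inv _ hgt, Matrix.mul_one]
  have h1 : (G * Y * Gᵀ)⁻¹ * (G * H * Gᵀ) * (G * Y * Gᵀ)⁻¹ * (G * H * Gᵀ)
      = (Gᵀ)⁻¹ * ((Y⁻¹ * H * Y⁻¹ * H) * Gᵀ) := by
    simp only [Matrix.mul_inv_rev, Matrix.mul_assoc, Matrix.nonsing_inv_mul_cancel_left _ _ hg,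
      Matrix.mul_nonsing_inv_cancel_left _ _ hgt]
  have h2 : (G * Y * Gᵀ)⁻¹ * (K * Gᵀ)ᵀ * (K * Gᵀ) = (Gᵀ)⁻¹ * ((Y⁻¹ * Kᵀ * K) * Gᵀ) := by
    simp only [Matrix.mul_inv_rev, Matrix.transpose_mul, Matrix.transpose_transpose,
      Matrix.mul_assoc, Matrix.nonsing_inv_mul_cancel_left _ _ hg]
  rw [h1, h2, key, key]
end

section
/- Minkowski reduction theory (property R1): for every Y ∈ 𝒫_n there exist A ∈ GL(n,ℤ) and a Minkowski-reduced matrix R ∈ ℜ_n such that Y = ᵗA R A; equivalently, for every Y ∈ 𝒫_n there exists A ∈ GL(n,ℤ) such that ᵗA Y A ∈ ℜ_n. -/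
open Matrix

/-- `Y` lies in the Minkowski fundamental domain `ℜ_n`: `Y` is symmetric positive definite,
(M.1) `a Y ᵗa ≥ y_{kk}` for every integer row vector `a` with `gcd(a_k,…,a_n) = 1`, and
(M.2) `y_{k,k+1} ≥ 0` for `k = 1,…,n−1`. -/
def MinkowskiReduced {n : ℕ} (Y : Matrix (Fin n) (Fin n) ℝ) : Prop :=
  Y.PosDef ∧
  (∀ (k : Fin n) (a : Fin n → ℤ), Finset.gcd (Finset.Ici k) a = 1 →
    Y k k ≤ (fun i => (a i : ℝ)) ⬝ᵥ Y.mulVec (fun i => (a i : ℝ))) ∧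
  (∀ (k : Fin n) (h : (k : ℕ) + 1 < n), 0 ≤ Y k ⟨(k : ℕ) + 1, h⟩)

/-- The sign-tracking unimodularity condition for integer matrices. -/
def MRUni {n : ℕ} (A : Matrix (Fin n) (Fin n) ℤ) : Prop := A.det = 1 ∨ A.det = -1

theorem MRUni.mul {n : ℕ} {A B : Matrix (Fin n) (Fin n) ℤ} (hA : MRUni A) (hB : MRUni B) :
    MRUni (A * B) := by
  unfold MRUni at *
  rw [Matrix.det_mul]
  rcases hA with h | h <;> rcases hB with h' | h' <;> simp [h, h']

theorem MRUni.isUnit {n : ℕ} {A : Matrix (Fin n) (Fin n) ℤ} (hA : MRUni A) : IsUnit A.det :=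
  Int.isUnit_iff.2 hA

/-- `a` is column `k` of a unimodular matrix whose columns before `k` are standard. -/
def MRExt {n : ℕ} (k : Fin n) (a : Fin n → ℤ) : Prop :=
  ∃ C : Matrix (Fin n) (Fin n) ℤ, MRUni C ∧
    (∀ l, l < k → ∀ r, C r l = (1 : Matrix (Fin n) (Fin n) ℤ) r l) ∧ ∀ r, C r k = a r

theorem MRExt.base {n : ℕ} (k : Fin n) (a : Fin n → ℤ) (h : a k = 1 ∨ a k = -1) :
    MRExt k a := by
  refine ⟨(1 : Matrix (Fin n) (Fin n) ℤ).updateCol k a, ?_, ?_, ?_⟩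
  · unfold MRUni
    rw [← Matrix.cramer_apply, Matrix.cramer_one]
    simpa using h
  · intro l hl r
    rw [Matrix.updateCol_ne hl.ne]
  · intro r
    simp

theorem MRExt.step {n : ℕ} (k : Fin n) (a : Fin n → ℤ) (i j : Fin n) (hi : k ≤ i) (hij : j ≠ i)
    (q : ℤ) (h : MRExt k (Function.update a j (a j - q * a i))) : MRExt k a := by
  obtain ⟨C, hC, h1, h2⟩ := h
  refine ⟨Matrix.transvection j i q * C, MRUni.mul ?_ hC, ?_, ?_⟩
  · left
    exact Matrix.det_transvection_of_ne _ _ hij q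
  · intro l hl r
    by_cases hr : r = j
    · subst hr
      rw [Matrix.transvection_mul_apply_same, h1 l hl, h1 l hl,
        Matrix.one_apply_ne (lt_of_lt_of_le hl hi).ne']
      simp
    · rw [Matrix.transvection_mul_apply_of_ne _ _ _ _ hr, h1 l hl]
  · intro r
    by_cases hr : r = j
    · subst hr
      rw [Matrix.transvection_mul_apply_same, h2, h2]
      simp [Function.update_of_ne hij.symm]
    · rw [Matrix.transvection_mul_apply_of_ne _ _ _ _ hr, h2]
      simp [hr]

theorem MRExt.of_prim {n : ℕ} (k : Fin n) : ∀ (m : ℕ) (a : Fin n → ℤ),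
    (∀ d : ℤ, (∀ i, k ≤ i → d ∣ a i) → IsUnit d) →
    (∃ i, k ≤ i ∧ a i ≠ 0 ∧ (a i).natAbs = m) → MRExt k a := by
  intro m
  induction m using Nat.strong_induction_on with
  | _ m ih =>
    rintro a ha ⟨i, hi, hi0, him⟩
    by_cases hdvd : ∀ j, k ≤ j → a i ∣ a j
    · have hu := Int.isUnit_iff.1 (ha _ hdvd)
      by_cases hik : k = i
      · subst hik
        exact MRExt.base _ _ hu
      · apply MRExt.step k a i k hi hik ((a k - 1) * a i)
        apply MRExt.base
        left
        rcases hu with h | h <;> simp [h]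
    · push Not at hdvd
      obtain ⟨j, hj, hdj⟩ := hdvd
      have hji : j ≠ i := by
        rintro rfl
        exact hdj dvd_rfl
      apply MRExt.step k a i j hi hji (a j / a i)
      have hmod : a j - a j / a i * a i = a j % a i := by
        rw [Int.emod_def, mul_comm]
      have hne : a j % a i ≠ 0 := fun h => hdj (Int.dvd_of_emod_eq_zero h)
      refine ih (a j % a i).natAbs ?_ _ ?_ ⟨j, hj, ?_, ?_⟩
      · have h1 := Int.emod_nonneg (a j) hi0
        have h2 := Int.emod_lt_abs (a j) hi0
        rw [Int.abs_eq_natAbs] at h2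
        rw [← him]
        omega
      · intro d hd
        apply ha
        have hdi : d ∣ a i := by simpa [Function.update_of_ne hji.symm] using hd i hi
        intro l hl
        by_cases hlj : l = j
        · subst hlj
          have h3 := hd l hl
          simp only [Function.update_self] at h3
          have := dvd_add h3 (hdi.mul_left (a l / a i))
          simpa using this
        · simpa [hlj] using hd l hl
      · simpa [hmod] using hne
      · simp [hmod]

theorem MRExt.of_gcd {n : ℕ} (k : Fin n) (a : Fin n → ℤ)
    (h : Finset.gcd (Finset.Ici k) a = 1) : MRExt k a := by
  have ha : ∀ d : ℤ, (∀ i, k ≤ i → d ∣ a i) → IsUnit d := by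
    intro d hd
    apply isUnit_of_dvd_one
    rw [← h]
    exact Finset.dvd_gcd fun i hi => hd i (Finset.mem_Ici.1 hi)
  have : ∃ i, k ≤ i ∧ a i ≠ 0 := by
    by_contra! hc
    have := ha 0 (fun i hi => by rw [hc i hi])
    simp at this
  obtain ⟨i, hi, h0⟩ := this
  exact MRExt.of_prim k _ a ha ⟨i, hi, h0, rfl⟩

/-- The quadratic form of `Y` on integer vectors. -/
noncomputable def mrQ {n : ℕ} (Y : Matrix (Fin n) (Fin n) ℝ) (x : Fin n → ℤ) : ℝ :=
  (fun i => (x i : ℝ)) ⬝ᵥ Y.mulVec (fun i => (x i : ℝ))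

open scoped MatrixOrder in
open scoped Matrix.Norms.L2Operator in
theorem mr_factor {n : ℕ} {Y : Matrix (Fin n) (Fin n) ℝ} (hY : Y.PosDef) :
    ∃ B : Matrix (Fin n) (Fin n) ℝ, Y = Bᵀ * B := by
  obtain ⟨y, hy⟩ := CStarAlgebra.nonneg_iff_eq_star_mul_self.mp hY.posSemidef.nonneg
  exact ⟨y, by rw [hy, Matrix.star_eq_conjTranspose, Matrix.conjTranspose_eq_transpose_of_trivial]⟩

theorem mrQ_finite {n : ℕ} {Y : Matrix (Fin n) (Fin n) ℝ} (hY : Y.PosDef) (c : ℝ) :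
    {x : Fin n → ℤ | mrQ Y x ≤ c}.Finite := by
  obtain ⟨B, rfl⟩ := mr_factor hY
  have hdet : IsUnit B.det := by
    have := (Matrix.isUnit_iff_isUnit_det _).1 hY.isUnit
    rw [Matrix.det_mul] at this
    exact isUnit_of_mul_isUnit_right this
  let M : Fin n → ℤ := fun i => ⌈∑ j, |B⁻¹ i j| * (c + 1)⌉
  refine (Set.finite_Icc (-M) M).subset ?_
  intro x hx
  set v : Fin n → ℝ := fun i => (x i : ℝ) with hv
  have hq : mrQ (Bᵀ * B) x = ∑ j, (B.mulVec v j) * (B.mulVec v j) := by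
    unfold mrQ
    rw [← hv, ← Matrix.mulVec_mulVec, Matrix.dotProduct_mulVec, Matrix.vecMul_transpose]
    rfl
  have hb : ∀ j, |B.mulVec v j| ≤ c + 1 := by
    intro j
    have h1 : (B.mulVec v j) * (B.mulVec v j) ≤ c := by
      have hx' : mrQ (Bᵀ * B) x ≤ c := hx
      rw [hq] at hx'
      refine le_trans ?_ hx'
      exact Finset.single_le_sum (f := fun j => (B.mulVec v j) * (B.mulVec v j))
        (fun i _ => mul_self_nonneg _) (Finset.mem_univ j)
    rw [abs_le]
    constructor <;> nlinarith [sq_nonneg (B.mulVec v j - 1), sq_nonneg (B.mulVec v j + 1)]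
  have hbound : ∀ i, |x i| ≤ M i := by
    intro i
    have h2 : v i = ∑ j, B⁻¹ i j * B.mulVec v j := by
      have : B⁻¹.mulVec (B.mulVec v) = v := by
        rw [Matrix.mulVec_mulVec, Matrix.nonsing_inv_mul _ hdet, Matrix.one_mulVec]
      conv_lhs => rw [← this]
      rfl
    have h3 : |v i| ≤ ∑ j, |B⁻¹ i j| * (c + 1) := by
      rw [h2]
      refine (Finset.abs_sum_le_sum_abs _ _).trans (Finset.sum_le_sum fun j _ => ?_)
      rw [abs_mul]
      exact mul_le_mul_of_nonneg_left (hb j) (abs_nonneg _)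
    have h4 : ((|x i| : ℤ) : ℝ) ≤ (M i : ℝ) := by
      rw [Int.cast_abs]
      exact h3.trans (Int.le_ceil _)
    exact_mod_cast h4
  exact ⟨fun i => (abs_le.1 (hbound i)).1, fun i => (abs_le.1 (hbound i)).2⟩

theorem mrQ_wf {n : ℕ} {Y : Matrix (Fin n) (Fin n) ℝ} (hY : Y.PosDef) :
    WellFounded (fun s t : Set.range (mrQ Y) => s < t) := by
  rw [WellFounded.wellFounded_iff_has_min]
  intro T ⟨t, ht⟩
  have hfin : {s : Set.range (mrQ Y) | s ∈ T ∧ s ≤ t}.Finite := by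
    have h1 := (mrQ_finite hY t.1).image (mrQ Y)
    refine Set.Finite.of_finite_image (f := Subtype.val) (h1.subset ?_)
      Subtype.val_injective.injOn
    rintro _ ⟨⟨_, x, rfl⟩, ⟨_, hs⟩, rfl⟩
    exact ⟨x, hs, rfl⟩
  obtain ⟨m, hm, hmin⟩ := Set.exists_min_image _ id hfin ⟨t, ht, le_rfl⟩
  refine ⟨m, hm.1, fun x hx hlt => ?_⟩
  exact absurd (hmin x ⟨hx, hlt.le.trans hm.2⟩) (not_le.2 hlt)

theorem mr_exists_min {n : ℕ} {Y : Matrix (Fin n) (Fin n) ℝ} (hY : Y.PosDef) :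
    ∃ B : Matrix (Fin n) (Fin n) ℤ, MRUni B ∧
      ∀ (k : Fin n) (a : Fin n → ℤ), Finset.gcd (Finset.Ici k) a = 1 →
        mrQ Y (fun r => B r k) ≤ mrQ Y (B.mulVec a) := by
  let f : Matrix (Fin n) (Fin n) ℤ → (Fin n → Set.range (mrQ Y)) :=
    fun B k => ⟨mrQ Y (fun r => B r k), _, rfl⟩
  have hwf : WellFounded (Pi.Lex (fun i j : Fin n => i < j)
      (fun {_ : Fin n} (s t : Set.range (mrQ Y)) => s < t)) :=
    Pi.Lex.wellFounded _ (fun _ => mrQ_wf hY)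
  obtain ⟨B, hB, hmin⟩ := (InvImage.wf f hwf).has_min {B | MRUni B} ⟨1, Or.inl Matrix.det_one⟩
  refine ⟨B, hB, fun k a ha => ?_⟩
  by_contra! hlt
  obtain ⟨C, hC, h1, h2⟩ := MRExt.of_gcd k a ha
  refine hmin (B * C) (hB.mul hC) ⟨k, ?_, ?_⟩
  · intro l hl
    apply Subtype.ext
    have : (fun r => (B * C) r l) = fun r => B r l := by
      funext r
      simp only [Matrix.mul_apply, h1 l hl]
      rw [← Matrix.mul_apply, Matrix.mul_one]
    simp only [f, this]
  · have : (fun r => (B * C) r k) = B.mulVec a := by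
      funext r
      simp only [Matrix.mul_apply, h2]
      rfl
    simp only [f, this]
    exact hlt

theorem mr_signs (f : ℕ → ℝ) : ∃ s : ℕ → ℤ, (∀ k, s k = 1 ∨ s k = -1) ∧
    ∀ k, 0 ≤ (s k : ℝ) * f k * s (k + 1) := by
  let s : ℕ → ℤ := fun k => Nat.rec 1 (fun k p => if 0 ≤ f k then p else -p) k
  have hs : ∀ k, s (k + 1) = if 0 ≤ f k then s k else - s k := fun k => rfl
  have h1 : ∀ k, s k = 1 ∨ s k = -1 := by
    intro k
    induction k with
    | zero => left; rfl
    | succ k ih =>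
      rw [hs]
      split_ifs
      · exact ih
      · rcases ih with h | h <;> simp [h]
  refine ⟨s, h1, fun k => ?_⟩
  rw [hs]
  split_ifs with h
  · rcases h1 k with h' | h' <;> simp [h', h]
  · rcases h1 k with h' | h' <;> simp [h'] <;> linarith

theorem mrQ_conj {n : ℕ} (Y : Matrix (Fin n) (Fin n) ℝ) (B : Matrix (Fin n) (Fin n) ℤ)
    (a : Fin n → ℤ) :
    mrQ ((B.map (Int.cast : ℤ → ℝ))ᵀ * Y * B.map (Int.cast : ℤ → ℝ)) a = mrQ Y (B.mulVec a) := by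
  have h : (fun i => ((B.mulVec a i : ℤ) : ℝ)) =
      (B.map (Int.cast : ℤ → ℝ)).mulVec (fun i => (a i : ℝ)) := by
    funext i
    simp [Matrix.mulVec, dotProduct]
  unfold mrQ
  rw [h, ← Matrix.mulVec_mulVec, ← Matrix.mulVec_mulVec, Matrix.dotProduct_mulVec,
    Matrix.vecMul_transpose]

theorem mrQ_single {n : ℕ} (Y : Matrix (Fin n) (Fin n) ℝ) (k : Fin n) :
    mrQ Y (Pi.single k 1) = Y k k := by
  have h : (fun i => ((Pi.single k 1 : Fin n → ℤ) i : ℝ)) = Pi.single k 1 := by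
    funext i
    by_cases hi : i = k
    · subst hi; simp
    · simp [hi]
  unfold mrQ
  rw [h]
  simp

theorem minkowski_reduction_R1 (n : ℕ)
    (Y : Matrix (Fin n) (Fin n) ℝ) (hY : Y.PosDef) :
    ∃ (A : Matrix (Fin n) (Fin n) ℤ) (R : Matrix (Fin n) (Fin n) ℝ),
      (A.det = 1 ∨ A.det = -1) ∧ MinkowskiReduced R ∧
      Y = (A.map (Int.cast : ℤ → ℝ))ᵀ * R * A.map (Int.cast : ℤ → ℝ) := by
  obtain ⟨B₀, hB₀, hmin⟩ := mr_exists_min hY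
  let R₀ := (B₀.map (Int.cast : ℤ → ℝ))ᵀ * Y * B₀.map (Int.cast : ℤ → ℝ)
  obtain ⟨s, hs, hsign⟩ := mr_signs
    (fun k => if h : k + 1 < n then R₀ ⟨k, by omega⟩ ⟨k + 1, h⟩ else 0)
  let D : Matrix (Fin n) (Fin n) ℤ := Matrix.diagonal fun i => s i
  have hDD : D * D = 1 := by
    simp only [D, Matrix.diagonal_mul_diagonal]
    rw [← Matrix.diagonal_one]
    congr 1
    funext i
    rcases hs i with h | h <;> simp [h]
  have hD : MRUni D := by
    have : D.det * D.det = 1 := by rw [← Matrix.det_mul, hDD, Matrix.det_one]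
    exact Int.isUnit_iff.1 (IsUnit.of_mul_eq_one _ this)
  have hB : MRUni (B₀ * D) := hB₀.mul hD
  set B := B₀ * D with hBdef
  let P := B.map (Int.cast : ℤ → ℝ)
  let A := B⁻¹
  have hBA : B * A = 1 := Matrix.mul_nonsing_inv _ hB.isUnit
  have hmap : ∀ X Z : Matrix (Fin n) (Fin n) ℤ, (X * Z).map (Int.cast : ℤ → ℝ) =
      X.map (Int.cast : ℤ → ℝ) * Z.map (Int.cast : ℤ → ℝ) := by
    intro X Z
    exact Matrix.map_mul (f := Int.castRingHom ℝ)
  have hPA : P * A.map (Int.cast : ℤ → ℝ) = 1 := by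
    rw [← hmap, hBA]
    exact Matrix.map_one _ Int.cast_zero Int.cast_one
  have hAP : A.map (Int.cast : ℤ → ℝ) * P = 1 := mul_eq_one_comm.1 hPA
  refine ⟨A, Pᵀ * Y * P, ?_, ⟨?_, ?_, ?_⟩, ?_⟩
  · have h : B.det * A.det = 1 := by rw [← Matrix.det_mul, hBA, Matrix.det_one]
    exact Int.isUnit_iff.1 (IsUnit.of_mul_eq_one_right _ h)
  · have hinj : Function.Injective P.mulVec := by
      apply Matrix.mulVec_injective_of_isUnit
      exact IsUnit.of_mul_eq_one _ hPA
    have := hY.conjTranspose_mul_mul_same hinj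
    rwa [Matrix.conjTranspose_eq_transpose_of_trivial] at this
  · intro k a ha
    have e1 : (Pᵀ * Y * P) k k = mrQ Y (fun r => B₀ r k) := by
      rw [← mrQ_single (Pᵀ * Y * P) k, mrQ_conj]
      have : B.mulVec (Pi.single k 1) = fun r => s k * B₀ r k := by
        funext r
        simp [hBdef, D, mul_comm]
      rw [this]
      unfold mrQ
      rcases hs k with h | h
      · simp [h]
      · simp only [h]
        have : (fun i => (((-1 : ℤ) * B₀ i k : ℤ) : ℝ)) = -(fun i => (B₀ i k : ℝ)) := by
          funext i; simp
        rw [this, Matrix.mulVec_neg]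
        simp
    rw [e1]
    change _ ≤ mrQ (Pᵀ * Y * P) a
    rw [mrQ_conj, hBdef, ← Matrix.mulVec_mulVec]
    apply hmin
    have hDa : D.mulVec a = fun i : Fin n => s i * a i := by
      funext i
      simp [D, Matrix.mulVec_diagonal]
    rw [hDa, ← ha]
    apply dvd_antisymm_of_normalize_eq Finset.normalize_gcd Finset.normalize_gcd
    · apply Finset.dvd_gcd
      intro i hi
      have := Finset.gcd_dvd (f := fun i : Fin n => s i * a i) hi
      rcases hs i with h | h <;> simpa [h] using this
    · apply Finset.dvd_gcd
      intro i hi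
      have := Finset.gcd_dvd (f := a) hi
      exact this.mul_left _
  · intro k hk
    have h := hsign k
    simp only [hk, dif_pos] at h
    have e : Pᵀ * Y * P = D.map (Int.cast : ℤ → ℝ) * R₀ * D.map (Int.cast : ℤ → ℝ) := by
      have hDt : (D.map (Int.cast : ℤ → ℝ))ᵀ = D.map (Int.cast : ℤ → ℝ) := by
        rw [← Matrix.transpose_map, Matrix.diagonal_transpose]
      simp only [P, hBdef, hmap, Matrix.transpose_mul, hDt, R₀, Matrix.mul_assoc]
    rw [e]
    have hDm : D.map (Int.cast : ℤ → ℝ) = Matrix.diagonal fun i : Fin n => (s i : ℝ) := by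
      simp [D, Matrix.diagonal_map]
    rw [hDm, Matrix.mul_diagonal, Matrix.diagonal_mul]
    exact h
  · have e : (A.map (Int.cast : ℤ → ℝ))ᵀ * (Pᵀ * Y * P) * A.map (Int.cast : ℤ → ℝ) =
        (P * A.map (Int.cast : ℤ → ℝ))ᵀ * Y * (P * A.map (Int.cast : ℤ → ℝ)) := by
      simp only [Matrix.transpose_mul, Matrix.mul_assoc]
    rw [e, hPA]
    simp
end
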